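/- Let G be a finite simple graph, Z a cycle in G, λ : E(G) → ℤ/2 an edge labeling, and B a bridge of G with respect to Z containing a vertex v ∉ V(Z). For u ∈ V(B) ∩ V(Z) define L_v(u) = { λ(ω) : ω is a proper walk in B from u to v } ⊆ ℤ/2. Then for any x, y ∈ V(B) ∩ V(Z) (possibly x = y), there exists a nontrivial proper walk in B from x to y if and only if L_v(x) ∪ L_v(y) = {0, 1}. -/

import Mathlib

open SimpleGraph

variable {V : Type*}

/-- The `λ`-value of a walk: the sum in `ℤ/2`, over the edges of the walk counted with
multiplicity, of their labels. -/
def walkLambda (lam : Sym2 V → ZMod 2) {G : SimpleGraph V} {x y : V} (w : G.Walk x y) :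
    ZMod 2 :=
  (w.edges.map lam).sum

/-- `b` can be reached from `a` by a walk in `G` all of whose vertices avoid `Zv`. -/
def ReachAvoiding (G : SimpleGraph V) (Zv : Set V) (a b : V) : Prop :=
  ∃ w : G.Walk a b, ∀ x ∈ w.support, x ∉ Zv

/-- `B` is a bridge of `G` with respect to a cycle with vertex set `Zv` and edge set `Ze`:
either a single edge not of the cycle together with its two endpoints, both on the cycle,
or a connected component of `G − Zv` together with all edges (and their endpoints on the
cycle) joining it to `Zv`. -/
def IsBridgeOf (G : SimpleGraph V) (Zv : Set V) (Ze : Set (Sym2 V)) (B : G.Subgraph) :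
    Prop :=
  (∃ u v, G.Adj u v ∧ s(u, v) ∉ Ze ∧ u ∈ Zv ∧ v ∈ Zv ∧
      B.verts = {u, v} ∧ ∀ a b, B.Adj a b ↔ s(a, b) = s(u, v)) ∨
  (∃ a, a ∉ Zv ∧
      B.verts = {b | ReachAvoiding G Zv a b} ∪
        {z | z ∈ Zv ∧ ∃ c, ReachAvoiding G Zv a c ∧ G.Adj c z} ∧
      ∀ x y, B.Adj x y ↔
        G.Adj x y ∧ (ReachAvoiding G Zv a x ∨ ReachAvoiding G Zv a y))

/-- `w` is a proper walk lying in the subgraph `B`, with respect to a cycle with vertex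
set `Zv` and edge set `Ze`: the walk lies in `B`, none of its vertices lies on the cycle
except possibly its endpoints, and none of its edges is an edge of the cycle. -/
def IsProperWalkIn {G : SimpleGraph V} (B : G.Subgraph) (Zv : Set V) (Ze : Set (Sym2 V))
    {x y : V} (w : G.Walk x y) : Prop :=
  (∀ u ∈ w.support, u ∈ B.verts) ∧ (∀ e ∈ w.edges, e ∈ B.edgeSet) ∧
    (∀ u ∈ w.support, u ∈ Zv → u = x ∨ u = y) ∧ (∀ e ∈ w.edges, e ∉ Ze)

/-- The set of `λ`-values of proper walks in `B` from `x` to the reference vertex `w`. -/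
def labelSet {G : SimpleGraph V} (B : G.Subgraph) (Zv : Set V) (Ze : Set (Sym2 V))
    (lam : Sym2 V → ZMod 2) (x w : V) : Set (ZMod 2) :=
  {t | ∃ ω : G.Walk x w, IsProperWalkIn B Zv Ze ω ∧ walkLambda lam ω = t}

/-- A graph is 2-connected: it has at least three vertices, it is connected, and it
remains connected after the deletion of any single vertex. -/
def TwoConnected (G : SimpleGraph V) : Prop :=
  3 ≤ Nat.card V ∧ G.Connected ∧ ∀ v : V, (G.induce {u | u ≠ v}).Connected

/-!
Write `L(u)` for the set of labels of proper walks from `u` to `v`. As `v` is off the cycle, a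
proper walk from `x` to `v` and the reverse of one from `y` to `v` concatenate to a proper walk
from `x` to `y`; since `L(x)` and `L(y)` are nonempty, `L(x) ∪ L(y) = {0, 1}` provides two different
labels to combine. Conversely, suppose `L(x) ∪ L(y) = {t}`. A proper walk from `x` to `y` may return
to `x` or `y` before its end, so extending initial pieces of it to `v` need not give proper walks.
Instead the labels in `L` act as a potential that telescopes along the walk: if `s ∈ L(u)`, then any
walk in `B` from `u` to `y` meeting the cycle only in `x` and `y` has label `s + t`. Taking `u = x`
gives `t + t = 0`.
-/

section WalkLambda

variable {G : SimpleGraph V} (lam : Sym2 V → ZMod 2) {x y z : V}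

theorem walkLambda_cons (h : G.Adj x y) (w : G.Walk y z) :
    walkLambda lam (Walk.cons h w) = lam s(x, y) + walkLambda lam w := by
  simp [walkLambda]

theorem walkLambda_append (p : G.Walk x y) (q : G.Walk y z) :
    walkLambda lam (p.append q) = walkLambda lam p + walkLambda lam q := by
  simp [walkLambda]

theorem walkLambda_reverse (w : G.Walk x y) : walkLambda lam w.reverse = walkLambda lam w := by
  simp [walkLambda, List.sum_reverse]

end WalkLambda

section ProperWalk

variable {G : SimpleGraph V} {B : G.Subgraph} {Zv : Set V} {Ze : Set (Sym2 V)} {x y z : V}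

theorem IsProperWalkIn.nil (hx : x ∈ B.verts) :
    IsProperWalkIn B Zv Ze (Walk.nil : G.Walk x x) := by
  simp [IsProperWalkIn, hx]

theorem IsProperWalkIn.toWalk (h : B.Adj x y) (he : s(x, y) ∉ Ze) :
    IsProperWalkIn B Zv Ze h.adj_sub.toWalk := by
  simp [IsProperWalkIn, h, h.fst_mem, h.snd_mem, he]

theorem IsProperWalkIn.reverse {w : G.Walk x y} (hw : IsProperWalkIn B Zv Ze w) :
    IsProperWalkIn B Zv Ze w.reverse := by
  simpa [IsProperWalkIn, or_comm] using hw

theorem IsProperWalkIn.append {p : G.Walk x y} {q : G.Walk y z} (hp : IsProperWalkIn B Zv Ze p)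
    (hq : IsProperWalkIn B Zv Ze q) (hy : y ∉ Zv) : IsProperWalkIn B Zv Ze (p.append q) := by
  obtain ⟨hpV, hpE, hpZ, hpZe⟩ := hp
  obtain ⟨hqV, hqE, hqZ, hqZe⟩ := hq
  simp only [IsProperWalkIn, Walk.mem_support_append_iff, Walk.edges_append, List.mem_append]
  refine ⟨fun u hu => hu.elim (hpV u) (hqV u), fun e he => he.elim (hpE e) (hqE e), ?_,
    fun e he => he.elim (hpZe e) (hqZe e)⟩
  rintro u (hu | hu) huZ
  · exact (hpZ u hu huZ).imp_right fun h => absurd (h ▸ huZ) hy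
  · exact (hqZ u hu huZ).imp_left fun h => absurd (h ▸ huZ) hy

end ProperWalk

section LabelSet

variable {G : SimpleGraph V} {B : G.Subgraph} {Zv : Set V} {Ze : Set (Sym2 V)}
  {lam : Sym2 V → ZMod 2} {x y z : V} {s t : ZMod 2}

theorem zero_mem_labelSet (hx : x ∈ B.verts) : 0 ∈ labelSet B Zv Ze lam x x :=
  ⟨Walk.nil, IsProperWalkIn.nil hx, rfl⟩

theorem mem_labelSet_symm (hs : s ∈ labelSet B Zv Ze lam x y) : s ∈ labelSet B Zv Ze lam y x := by
  obtain ⟨w, hw, rfl⟩ := hs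
  exact ⟨w.reverse, hw.reverse, walkLambda_reverse lam w⟩

theorem add_mem_labelSet (hs : s ∈ labelSet B Zv Ze lam x y) (ht : t ∈ labelSet B Zv Ze lam y z)
    (hy : y ∉ Zv) : s + t ∈ labelSet B Zv Ze lam x z := by
  obtain ⟨p, hp, rfl⟩ := hs
  obtain ⟨q, hq, rfl⟩ := ht
  exact ⟨p.append q, hp.append hq hy, walkLambda_append lam p q⟩

theorem add_mem_labelSet_of_adj (hZe : ∀ e ∈ Ze, ∀ u ∈ e, u ∈ Zv) (h : B.Adj x y) (hy : y ∉ Zv)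
    (hs : s ∈ labelSet B Zv Ze lam y z) : lam s(x, y) + s ∈ labelSet B Zv Ze lam x z := by
  have he : s(x, y) ∉ Ze := fun he => hy (hZe _ he y (Sym2.mem_mk_right x y))
  have hlam : lam s(x, y) ∈ labelSet B Zv Ze lam x y :=
    ⟨h.adj_sub.toWalk, IsProperWalkIn.toWalk h he, by simp [walkLambda]⟩
  exact add_mem_labelSet hlam hs hy

end LabelSet

section ReachAvoiding

variable {G : SimpleGraph V} {S : Set V} {a b c : V}

theorem ReachAvoiding.refl (ha : a ∉ S) : ReachAvoiding G S a a :=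
  ⟨Walk.nil, by simpa using ha⟩

theorem ReachAvoiding.symm (h : ReachAvoiding G S a b) : ReachAvoiding G S b a := by
  obtain ⟨w, hw⟩ := h
  exact ⟨w.reverse, by simpa using hw⟩

theorem ReachAvoiding.trans (hab : ReachAvoiding G S a b) (hbc : ReachAvoiding G S b c) :
    ReachAvoiding G S a c := by
  obtain ⟨p, hp⟩ := hab
  obtain ⟨q, hq⟩ := hbc
  refine ⟨p.append q, fun u hu => ?_⟩
  exact ((Walk.mem_support_append_iff p q).1 hu).elim (hp u) (hq u)

theorem ReachAvoiding.notMem (h : ReachAvoiding G S a b) : b ∉ S := by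
  obtain ⟨w, hw⟩ := h
  exact hw b w.end_mem_support

theorem ReachAvoiding.congr_left (h : ReachAvoiding G S a b) :
    ReachAvoiding G S a c ↔ ReachAvoiding G S b c :=
  ⟨h.symm.trans, h.trans⟩

end ReachAvoiding

section Bridge

variable {G : SimpleGraph V} {B : G.Subgraph} {Zv : Set V} {Ze : Set (Sym2 V)} {u v x y : V}

theorem IsBridgeOf.verts_eq_and_adj_iff (hB : IsBridgeOf G Zv Ze B) (hvB : v ∈ B.verts)
    (hv : v ∉ Zv) :
    B.verts = {b | ReachAvoiding G Zv v b} ∪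
        {z | z ∈ Zv ∧ ∃ c, ReachAvoiding G Zv v c ∧ G.Adj c z} ∧
      ∀ x y, B.Adj x y ↔ G.Adj x y ∧ (ReachAvoiding G Zv v x ∨ ReachAvoiding G Zv v y) := by
  rcases hB with ⟨p, q, _, _, hp, hq, hverts, _⟩ | ⟨a, _, hverts, hadj⟩
  · rw [hverts] at hvB
    rcases hvB with rfl | rfl
    · exact absurd hp hv
    · exact absurd hq hv
  · have hav : ReachAvoiding G Zv a v := by
      rw [hverts] at hvB
      exact hvB.resolve_right fun h => hv h.1
    simpa only [hav.congr_left] using And.intro hverts hadj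

theorem IsBridgeOf.reachAvoiding (hB : IsBridgeOf G Zv Ze B) (huB : u ∈ B.verts) (hu : u ∉ Zv)
    (hvB : v ∈ B.verts) (hv : v ∉ Zv) : ReachAvoiding G Zv u v := by
  rw [(hB.verts_eq_and_adj_iff huB hu).1] at hvB
  exact hvB.resolve_right fun h => hv h.1

theorem IsBridgeOf.adj_of_notMem (hB : IsBridgeOf G Zv Ze B) (hxB : x ∈ B.verts) (hx : x ∉ Zv)
    (h : G.Adj x y) : B.Adj x y :=
  ((hB.verts_eq_and_adj_iff hxB hx).2 x y).2 ⟨h, Or.inl (ReachAvoiding.refl hx)⟩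

theorem IsBridgeOf.exists_adj_notMem (hB : IsBridgeOf G Zv Ze B) (hvB : v ∈ B.verts) (hv : v ∉ Zv)
    (huB : u ∈ B.verts) (hu : u ∈ Zv) : ∃ c, B.Adj u c ∧ c ∉ Zv := by
  obtain ⟨hverts, hadj⟩ := hB.verts_eq_and_adj_iff hvB hv
  rw [hverts] at huB
  obtain ⟨-, c, hc, hcu⟩ := huB.resolve_left fun h => ReachAvoiding.notMem h hu
  exact ⟨c, (hadj u c).2 ⟨hcu.symm, Or.inr hc⟩, hc.notMem⟩

theorem IsBridgeOf.notMem_of_adj (hB : IsBridgeOf G Zv Ze B) (hvB : v ∈ B.verts) (hv : v ∉ Zv)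
    (h : B.Adj x y) (hx : x ∈ Zv) : y ∉ Zv :=
  have hreach := (((hB.verts_eq_and_adj_iff hvB hv).2 x y).1 h).2
  (hreach.resolve_left fun hvx => hvx.notMem hx).notMem

end Bridge

section Potential

variable {G : SimpleGraph V} {B : G.Subgraph} {Zv : Set V} {Ze : Set (Sym2 V)}
  {lam : Sym2 V → ZMod 2} {u v y : V}

theorem IsBridgeOf.labelSet_nonempty_of_walk (hB : IsBridgeOf G Zv Ze B)
    (hZe : ∀ e ∈ Ze, ∀ u ∈ e, u ∈ Zv) (huB : u ∈ B.verts) (w : G.Walk u v)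
    (hw : ∀ p ∈ w.support, p ∉ Zv) : (labelSet B Zv Ze lam u v).Nonempty := by
  induction w with
  | nil => exact ⟨0, zero_mem_labelSet huB⟩
  | @cons u c v huc w ih =>
    simp only [Walk.support_cons, List.forall_mem_cons] at hw
    have hBuc : B.Adj u c := hB.adj_of_notMem huB hw.1 huc
    obtain ⟨s, hs⟩ := ih hBuc.snd_mem hw.2
    exact ⟨_, add_mem_labelSet_of_adj hZe hBuc (hw.2 c w.start_mem_support) hs⟩

theorem IsBridgeOf.labelSet_nonempty (hB : IsBridgeOf G Zv Ze B)
    (hZe : ∀ e ∈ Ze, ∀ u ∈ e, u ∈ Zv) (hvB : v ∈ B.verts) (hv : v ∉ Zv) (huB : u ∈ B.verts) :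
    (labelSet B Zv Ze lam u v).Nonempty := by
  have nonempty_of_notMem {c : V} (hcB : c ∈ B.verts) (hc : c ∉ Zv) :
      (labelSet B Zv Ze lam c v).Nonempty := by
    obtain ⟨w, hw⟩ := hB.reachAvoiding hcB hc hvB hv
    exact hB.labelSet_nonempty_of_walk hZe hcB w hw
  by_cases hu : u ∈ Zv
  · obtain ⟨c, huc, hc⟩ := hB.exists_adj_notMem hvB hv huB hu
    obtain ⟨s, hs⟩ := nonempty_of_notMem huc.snd_mem hc
    exact ⟨_, add_mem_labelSet_of_adj hZe huc hc hs⟩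
  · exact nonempty_of_notMem huB hu

theorem IsBridgeOf.walkLambda_eq_add (hB : IsBridgeOf G Zv Ze B)
    (hZe : ∀ e ∈ Ze, ∀ u ∈ e, u ∈ Zv) (hvB : v ∈ B.verts) (hv : v ∉ Zv) {s t : ZMod 2}
    (w : G.Walk u y) (hw : ∀ e ∈ w.edges, e ∈ B.edgeSet) (hy : labelSet B Zv Ze lam y v ⊆ {t})
    (hZv : ∀ p ∈ w.support, p ∈ Zv → labelSet B Zv Ze lam p v ⊆ {t})
    (hs : s ∈ labelSet B Zv Ze lam u v) : walkLambda lam w = s + t := by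
  induction w generalizing s with
  | nil =>
    obtain rfl : s = t := hy hs
    exact (CharTwo.add_self_eq_zero s).symm
  | @cons u c y huc w ih =>
    simp only [Walk.edges_cons, List.forall_mem_cons, Subgraph.mem_edgeSet] at hw
    simp only [Walk.support_cons, List.forall_mem_cons] at hZv
    obtain ⟨hBuc, hw⟩ := hw
    rw [walkLambda_cons]
    by_cases hu : u ∈ Zv
    · have hc : c ∉ Zv := hB.notMem_of_adj hvB hv hBuc hu
      obtain ⟨r, hr⟩ := hB.labelSet_nonempty (lam := lam) hZe hvB hv hBuc.snd_mem
      have hlam : lam s(u, c) + r = t := hZv.1 hu (add_mem_labelSet_of_adj hZe hBuc hc hr)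
      have hst : s = t := hZv.1 hu hs
      rw [ih hw hy hZv.2 hr, ← add_assoc, hlam, hst]
    · have hcu : lam s(c, u) + s ∈ labelSet B Zv Ze lam c v :=
        add_mem_labelSet_of_adj hZe hBuc.symm hu hs
      rw [ih hw hy hZv.2 hcu, Sym2.eq_swap, add_assoc, CharTwo.add_cancel_left]

end Potential

theorem eq_zero_one_iff_nontrivial (S : Set (ZMod 2)) : S = {0, 1} ↔ S.Nontrivial := by
  refine ⟨fun h => h ▸ Set.nontrivial_pair zero_ne_one, fun ⟨a, ha, b, hb, hab⟩ => ?_⟩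
  have eq_or_eq : ∀ a b c : ZMod 2, a ≠ b → c = a ∨ c = b := by decide
  ext c
  exact iff_of_true ((eq_or_eq a b c hab).elim (· ▸ ha) (· ▸ hb)) (eq_or_eq 0 1 c zero_ne_one)

theorem exists_ne_of_nontrivial_union {α : Type*} {S T : Set α} (hS : S.Nonempty)
    (hT : T.Nonempty) (h : (S ∪ T).Nontrivial) : ∃ s ∈ S, ∃ t ∈ T, s ≠ t := by
  by_contra! heq
  obtain ⟨s, hs⟩ := hS
  obtain ⟨t, ht⟩ := hT
  refine h.not_subset_singleton (x := s) (Set.union_subset (fun a ha => ?_) fun b hb => ?_)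
  · exact (heq a ha t ht).trans (heq s hs t ht).symm
  · exact (heq s hs b hb).symm

theorem statement4_general {G : SimpleGraph V} (lam : Sym2 V → ZMod 2) {Zv : Set V}
    {Ze : Set (Sym2 V)} (hZe : ∀ e ∈ Ze, ∀ u ∈ e, u ∈ Zv) {B : G.Subgraph}
    (hB : IsBridgeOf G Zv Ze B) {v x y : V} (hvB : v ∈ B.verts) (hv : v ∉ Zv)
    (hxB : x ∈ B.verts) (hyB : y ∈ B.verts) :
    (∃ w : G.Walk x y, IsProperWalkIn B Zv Ze w ∧ walkLambda lam w ≠ 0) ↔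
      labelSet B Zv Ze lam x v ∪ labelSet B Zv Ze lam y v = {0, 1} := by
  have hx_ne := hB.labelSet_nonempty (lam := lam) hZe hvB hv hxB
  have hy_ne := hB.labelSet_nonempty (lam := lam) hZe hvB hv hyB
  rw [eq_zero_one_iff_nontrivial]
  constructor
  · rintro ⟨w, ⟨-, hwB, hwZ, -⟩, hw⟩
    contrapose! hw
    obtain ⟨t, ht⟩ := hx_ne
    have hunion := hw.eq_singleton_of_mem (Or.inl ht)
    obtain ⟨hx, hy⟩ := Set.union_subset_iff.1 hunion.subset
    have hZv : ∀ p ∈ w.support, p ∈ Zv → labelSet B Zv Ze lam p v ⊆ {t} := fun p hp hpZ =>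
      (hwZ p hp hpZ).elim (· ▸ hx) (· ▸ hy)
    rw [hB.walkLambda_eq_add hZe hvB hv w hwB hy hZv ht, CharTwo.add_self_eq_zero]
  · intro h
    obtain ⟨s, hs, t, ht, hst⟩ := exists_ne_of_nontrivial_union hx_ne hy_ne h
    obtain ⟨w, hw, hlam⟩ := add_mem_labelSet hs (mem_labelSet_symm ht) hv
    exact ⟨w, hw, by rwa [hlam, Ne, CharTwo.add_eq_zero]⟩

/-- For a bridge `B` with a reference vertex `v ∉ V(Z)` and vertices
`x, y ∈ V(B) ∩ V(Z)` (possibly equal), there is a nontrivial proper walk in `B` from `x`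
to `y` if and only if `L_v(x) ∪ L_v(y) = {0, 1}`. -/
theorem statement4 [Fintype V] (G : SimpleGraph V) (lam : Sym2 V → ZMod 2)
    (z₀ : V) (Z : G.Walk z₀ z₀) (hZ : Z.IsCycle) (B : G.Subgraph)
    (hB : IsBridgeOf G {u | u ∈ Z.support} {e | e ∈ Z.edges} B)
    (v : V) (hvB : v ∈ B.verts) (hvZ : v ∉ Z.support)
    (x y : V) (hxB : x ∈ B.verts) (hxZ : x ∈ Z.support)
    (hyB : y ∈ B.verts) (hyZ : y ∈ Z.support) :
    (∃ w : G.Walk x y, IsProperWalkIn B {u | u ∈ Z.support} {e | e ∈ Z.edges} w ∧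
        walkLambda lam w ≠ 0) ↔
      labelSet B {u | u ∈ Z.support} {e | e ∈ Z.edges} lam x v ∪
          labelSet B {u | u ∈ Z.support} {e | e ∈ Z.edges} lam y v = {0, 1} := by
  exact statement4_general lam (fun _ he _ hu => Z.mem_support_of_mem_edges he hu) hB hvB hvZ
    hxB hyB
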